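/- Let q ∈ ℂ with 0 < |q| < 1, let A : ℤ → ℂ be any sequence, and let b, x, y ∈ ℂ with b ≠ 0, y ≠ 0, and x ≠ q^{-m} for every m ∈ ℕ. Assume the families (i,j) ↦ (q/b;q)_i y^i A_{i-j} (-1)^j q^{j(j-1)/2} (x/y)^j / ((q;q)_i (q;q)_j) and (i,j) ↦ (-1)^j q^{j(j-1)/2} (x/y)^j A_{i-j} (q^{1-j}/b;q)_i (q^j y)^i / ((q;q)_j (x;q)_j (q;q)_i), both indexed by ℕ×ℕ, are absolutely summable. Then ∑_{i≥0} [(q/b;q)_i y^i / (q;q)_i] · ∑_{j≥0} A_{i-j} τ(j) (x/y)^j / (q;q)_j = (x;q)_∞ · ∑_{j≥0} [τ(j) (x/y)^j / ((q;q)_j (x;q)_j)] · ∑_{i≥0} A_{i-j} (q^{1-j}/b;q)_i (q^j y)^i / (q;q)_i. -/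

import Mathlib

/-- The finite q-shifted factorial `(a;q)_n = ∏_{k=0}^{n-1} (1 - a q^k)`. -/
noncomputable def qPoch (a q : ℂ) (n : ℕ) : ℂ := ∏ k ∈ Finset.range n, (1 - a * q ^ k)

/-- The infinite q-shifted factorial `(a;q)_∞ = ∏_{k=0}^{∞} (1 - a q^k)`. -/
noncomputable def qPochInf (a q : ℂ) : ℂ := ∏' k : ℕ, (1 - a * q ^ k)

/-- `τ(n) = (-1)^n q^{n(n-1)/2}` for `n : ℕ`. -/
noncomputable def qTau (q : ℂ) (n : ℕ) : ℂ := (-1 : ℂ) ^ n * q ^ (n * (n - 1) / 2)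

open Filter Topology

noncomputable def qPP (a c q : ℂ) (n : ℕ) : ℂ := ∏ k ∈ Finset.range n, (a - c * q ^ k)

theorem qPoch_zero' (a q : ℂ) : qPoch a q 0 = 1 := by simp [qPoch]
theorem qPoch_succ' (a q : ℂ) (n : ℕ) : qPoch a q (n+1) = qPoch a q n * (1 - a * q ^ n) := by
  simp [qPoch, Finset.prod_range_succ]
theorem qPoch_add' (a q : ℂ) (m n : ℕ) :
    qPoch a q (m+n) = qPoch a q m * qPoch (a * q ^ m) q n := by
  simp only [qPoch, Finset.prod_range_add]
  congr 1
  apply Finset.prod_congr rfl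
  intro k _
  ring
theorem qPoch_succ_left (a q : ℂ) (n : ℕ) :
    qPoch a q (n+1) = (1 - a) * qPoch (a * q) q n := by
  rw [add_comm, qPoch_add']
  simp [qPoch]
theorem qPP_succ' (a c q : ℂ) (n : ℕ) : qPP a c q (n+1) = qPP a c q n * (a - c * q ^ n) := by
  simp [qPP, Finset.prod_range_succ]
theorem qPP_succ_left (a c q : ℂ) (n : ℕ) : qPP a c q (n+1) = (a - c) * qPP a (c*q) q n := by
  simp only [qPP, Finset.prod_range_succ']
  rw [mul_comm]
  congr 1
  · simp
  · apply Finset.prod_congr rfl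
    intro k _
    ring
theorem qTau_zero' (q : ℂ) : qTau q 0 = 1 := by simp [qTau]
theorem qTau_succ' (q : ℂ) (n : ℕ) : qTau q (n+1) = - q ^ n * qTau q n := by
  have : (n+1) * (n+1-1) / 2 = n + n * (n-1) / 2 := by
    rw [← Finset.sum_range_id_mul_two (n+1), ← Finset.sum_range_id_mul_two n,
      Finset.sum_range_succ]
    omega
  rw [qTau, qTau, this, pow_add, pow_succ]
  ring
theorem qTau_add' (q : ℂ) (m n : ℕ) : qTau q (m+n) = qTau q m * qTau q n * q ^ (m*n) := by
  induction n with
  | zero => simp [qTau_zero']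
  | succ n ih => rw [← add_assoc, qTau_succ', ih, qTau_succ']; ring

theorem qPoch_ne (a q : ℂ) (h : ∀ k : ℕ, 1 - a * q ^ k ≠ 0) (n : ℕ) : qPoch a q n ≠ 0 :=
  Finset.prod_ne_zero_iff.mpr fun k _ => h k

theorem one_sub_pow_ne (q : ℂ) (hq1 : ‖q‖ < 1) (k : ℕ) : 1 - q ^ (k+1) ≠ 0 := by
  intro h
  have h2 : ‖q ^ (k+1)‖ < 1 := by
    rw [norm_pow]; exact pow_lt_one₀ (norm_nonneg _) hq1 (by omega)
  rw [← sub_eq_zero.mp h] at h2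
  simp at h2

theorem qq_ne (q : ℂ) (hq1 : ‖q‖ < 1) (n : ℕ) : qPoch q q n ≠ 0 :=
  qPoch_ne q q (fun k => by have := one_sub_pow_ne q hq1 k; rwa [pow_succ'] at this) n

theorem chu (q : ℂ) (hq1 : ‖q‖ < 1) (a : ℂ) (N : ℕ) :
    ∀ c : ℂ, (∀ k : ℕ, 1 - c * q ^ k ≠ 0) →
    ∑ p ∈ Finset.HasAntidiagonal.antidiagonal N, qPP a c q p.1 * qTau q p.1 /
      (qPoch q q p.1 * qPoch q q p.2 * qPoch c q p.1) = qPoch a q N / (qPoch q q N * qPoch c q N) := by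
  induction N with
  | zero => intro c hc; simp [qPP, qTau, qPoch]
  | succ N ih =>
    intro c hc
    have hcq : ∀ k : ℕ, 1 - c * q * q ^ k ≠ 0 := fun k => by
      have := hc (k+1); rwa [pow_succ', ← mul_assoc] at this
    have hN := one_sub_pow_ne q hq1 N
    have key : (1 - q ^ (N+1)) * ∑ p ∈ Finset.HasAntidiagonal.antidiagonal (N+1), qPP a c q p.1 * qTau q p.1 /
      (qPoch q q p.1 * qPoch q q p.2 * qPoch c q p.1) =
      ∑ p ∈ Finset.HasAntidiagonal.antidiagonal (N+1), (1 - q ^ p.2) * (qPP a c q p.1 * qTau q p.1 /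
        (qPoch q q p.1 * qPoch q q p.2 * qPoch c q p.1)) +
      ∑ p ∈ Finset.HasAntidiagonal.antidiagonal (N+1), q ^ p.2 * (1 - q ^ p.1) * (qPP a c q p.1 * qTau q p.1 /
        (qPoch q q p.1 * qPoch q q p.2 * qPoch c q p.1)) := by
      rw [Finset.mul_sum, ← Finset.sum_add_distrib]
      apply Finset.sum_congr rfl
      intro p hp
      rw [← Finset.HasAntidiagonal.mem_antidiagonal.mp hp, pow_add]
      ring
    have s1 : ∑ p ∈ Finset.HasAntidiagonal.antidiagonal (N+1), (1 - q ^ p.2) * (qPP a c q p.1 * qTau q p.1 /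
        (qPoch q q p.1 * qPoch q q p.2 * qPoch c q p.1)) =
        qPoch a q N / (qPoch q q N * qPoch c q N) := by
      rw [Finset.Nat.sum_antidiagonal_succ', ← ih c hc]
      simp only [pow_zero, sub_self, zero_mul, add_zero, zero_add]
      apply Finset.sum_congr rfl
      intro p hp
      have h1 := one_sub_pow_ne q hq1 p.2
      have h2 := qq_ne q hq1 p.1
      have h3 := qq_ne q hq1 p.2
      have h4 := qPoch_ne c q hc p.1
      rw [qPoch_succ' q q p.2, ← pow_succ']
      field_simp
    have s2 : ∑ p ∈ Finset.HasAntidiagonal.antidiagonal (N+1), q ^ p.2 * (1 - q ^ p.1) * (qPP a c q p.1 * qTau q p.1 /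
        (qPoch q q p.1 * qPoch q q p.2 * qPoch c q p.1)) =
        - q ^ N * (a - c) / (1 - c) * (qPoch a q N / (qPoch q q N * qPoch (c*q) q N)) := by
      rw [Finset.Nat.sum_antidiagonal_succ, ← ih (c*q) hcq, Finset.mul_sum]
      simp only [pow_zero, sub_self, zero_mul, mul_zero, zero_add]
      apply Finset.sum_congr rfl
      intro p hp
      have h1 := one_sub_pow_ne q hq1 p.1
      have h2 := qq_ne q hq1 p.1
      have h3 := qq_ne q hq1 p.2
      have h4 := qPoch_ne (c*q) q hcq p.1
      have h5 : 1 - c ≠ 0 := by simpa using hc 0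
      rw [qPoch_succ' q q p.1, ← pow_succ', qPP_succ_left, qPoch_succ_left c, qTau_succ',
        ← Finset.HasAntidiagonal.mem_antidiagonal.mp hp, pow_add q p.1 p.2]
      generalize c * q = d at h4 ⊢
      generalize 1 - q ^ (p.1 + 1) = D at h1 ⊢
      field_simp
    rw [s1, s2] at key
    apply mul_left_cancel₀ hN
    rw [key]
    have h2 := qq_ne q hq1 N
    have h4 := qPoch_ne (c*q) q hcq N
    have h3 := qPoch_ne c q hc N
    have h5 : 1 - c ≠ 0 := by simpa using hc 0
    have h6 := hc N
    have e : qPoch (c*q) q N = qPoch c q N * (1 - c * q ^ N) / (1 - c) := by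
      rw [eq_div_iff h5, ← qPoch_succ', qPoch_succ_left, mul_comm]
    rw [e, qPoch_succ' q, qPoch_succ' a, qPoch_succ' c, ← pow_succ']
    generalize hD : 1 - c * q ^ N = D at h6 ⊢
    generalize 1 - q ^ (N + 1) = D' at hN ⊢
    field_simp
    rw [← hD]
    ring

theorem summable_of_ratio (f g : ℕ → ℂ) (h : ∀ n, f (n+1) = g n * f n)
    (hg : Tendsto g atTop (𝓝 0)) : Summable fun n => ‖f n‖ := by
  have h2 : ∀ᶠ n in atTop, ‖g n‖ < 1/2 := by
    have := hg.norm
    rw [norm_zero] at this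
    exact this.eventually_lt_const (by norm_num)
  apply summable_of_ratio_norm_eventually_le (r := 1/2) (by norm_num)
  filter_upwards [h2] with n hn
  rw [norm_norm, norm_norm, h, norm_mul]
  exact mul_le_mul_of_nonneg_right hn.le (norm_nonneg _)

theorem tq (q : ℂ) (hq1 : ‖q‖ < 1) : Tendsto (fun n : ℕ => q ^ n) atTop (𝓝 0) :=
  tendsto_pow_atTop_nhds_zero_of_norm_lt_one hq1

theorem sumE (q : ℂ) (hq1 : ‖q‖ < 1) (z : ℂ) :
    Summable fun k : ℕ => ‖qTau q k * z ^ k / qPoch q q k‖ := by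
  apply summable_of_ratio _ (fun n => - q ^ n * z / (1 - q * q ^ n))
  · intro n
    rw [qTau_succ', qPoch_succ', pow_succ, mul_div_mul_comm, div_mul_div_comm, div_mul_div_comm]
    ring
  · have h := tq q hq1
    have : Tendsto (fun n : ℕ => - q ^ n * z / (1 - q * q ^ n)) atTop
        (𝓝 (-0 * z / (1 - q * 0))) := ((h.neg).mul_const z).div ((h.const_mul q).const_sub 1) (by simp)
    simpa using this

theorem sumT (q : ℂ) (hq1 : ‖q‖ < 1) (a c x : ℂ) :
    Summable fun j : ℕ => ‖qPP a c q j * qTau q j ^ 2 * x ^ j / (qPoch q q j * qPoch c q j)‖ := by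
  apply summable_of_ratio _ (fun n => (a - c * q ^ n) * (q ^ n * q ^ n * x) /
    ((1 - q * q ^ n) * (1 - c * q ^ n)))
  · intro n
    rw [qTau_succ', qPoch_succ', qPoch_succ', qPP_succ', div_mul_div_comm]
    ring
  · have h := tq q hq1
    have : Tendsto (fun n : ℕ => (a - c * q ^ n) * (q ^ n * q ^ n * x) /
        ((1 - q * q ^ n) * (1 - c * q ^ n))) atTop
        (𝓝 ((a - c * 0) * (0 * 0 * x) / ((1 - q * 0) * (1 - c * 0)))) := (((h.const_mul c).const_sub a).mul ((h.mul h).mul_const x)).div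
      (((h.const_mul q).const_sub 1).mul ((h.const_mul c).const_sub 1)) (by simp)
    simpa using this

noncomputable def qE (q z : ℂ) : ℂ := ∑' k : ℕ, qTau q k * z ^ k / qPoch q q k

theorem qE_step (q : ℂ) (hq1 : ‖q‖ < 1) (z : ℂ) : qE q z = (1 - z) * qE q (z * q) := by
  have s1 := (sumE q hq1 z).of_norm
  have s2 := (sumE q hq1 (z*q)).of_norm
  have e : qE q z - qE q (z*q) = - z * qE q (z * q) := by
    simp only [qE]
    rw [← s1.tsum_sub s2, (s1.sub s2).tsum_eq_zero_add, ← tsum_mul_left]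
    simp only [pow_zero, sub_self, zero_add]
    apply tsum_congr
    intro k
    have h1 := one_sub_pow_ne q hq1 k
    have h2 := qq_ne q hq1 k
    rw [qTau_succ', qPoch_succ', ← pow_succ' q]
    field_simp
    ring
  linear_combination e

theorem qE_iter (q : ℂ) (hq1 : ‖q‖ < 1) (z : ℂ) (n : ℕ) :
    qE q z = qPoch z q n * qE q (z * q ^ n) := by
  induction n with
  | zero => simp [qPoch]
  | succ n ih => rw [ih, qE_step q hq1, qPoch_succ']; ring_nf

theorem qE_eq (q : ℂ) (hq1 : ‖q‖ < 1) (z : ℂ) : qE q z = qPochInf z q := by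
  have h1 : Tendsto (fun n : ℕ => qE q (z * q ^ n)) atTop (𝓝 1) := by
    have : (1:ℂ) = ∑' k : ℕ, qTau q k * (0:ℂ) ^ k / qPoch q q k := by
      rw [tsum_eq_single 0]
      · simp [qTau, qPoch]
      · intro k hk; simp [hk]
    rw [this]
    apply tendsto_tsum_of_dominated_convergence (sumE q hq1 z)
    · intro k
      have h := (tq q hq1).const_mul z
      rw [mul_zero] at h
      exact ((h.pow k).const_mul _).div_const _
    · refine Eventually.of_forall fun n k => ?_
      rw [norm_div, norm_div, norm_mul, norm_mul]
      gcongr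
      rw [norm_pow, norm_pow, norm_mul]
      gcongr
      apply mul_le_of_le_one_right (norm_nonneg _)
      rw [norm_pow]
      exact pow_le_one₀ (norm_nonneg _) hq1.le
  have hm : Multipliable (fun k : ℕ => 1 - z * q ^ k) := by
    have : Summable (fun k : ℕ => ‖- (z * q ^ k)‖) := by
      simp only [norm_neg, norm_mul, norm_pow]
      exact (summable_geometric_of_lt_one (norm_nonneg _) hq1).mul_left _
    simpa [sub_eq_add_neg] using multipliable_one_add_of_summable this
  have h2 : Tendsto (fun n => qPoch z q n) atTop (𝓝 (qPochInf z q)) := hm.hasProd.tendsto_prod_nat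
  have h3 := h2.mul h1
  simp only [← qE_iter q hq1 z, mul_one] at h3
  exact tendsto_nhds_unique tendsto_const_nhds h3

theorem tsum_anti (F : ℕ × ℕ → ℂ) (sF : Summable F) :
    ∑' p, F p = ∑' n : ℕ, ∑ p ∈ Finset.HasAntidiagonal.antidiagonal n, F p := by
  have s2 : Summable (fun t => F (Finset.HasAntidiagonal.sigmaAntidiagonalEquivProd t)) :=
    (Finset.HasAntidiagonal.sigmaAntidiagonalEquivProd.summable_iff).mpr sF
  rw [← Equiv.tsum_eq Finset.HasAntidiagonal.sigmaAntidiagonalEquivProd F, s2.tsum_sigma]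
  apply tsum_congr
  intro n
  rw [tsum_fintype, ← Finset.sum_coe_sort (Finset.HasAntidiagonal.antidiagonal n) F]
  rfl

theorem core (q : ℂ) (hq1 : ‖q‖ < 1) (a c x : ℂ) (hc : ∀ k : ℕ, 1 - c * q ^ k ≠ 0)
    (hx : ∀ k : ℕ, 1 - x * q ^ k ≠ 0) :
    ∑' j : ℕ, qPoch a q j * qTau q j * x ^ j / (qPoch c q j * qPoch q q j) =
    qPochInf x q * ∑' j : ℕ, qPP a c q j * qTau q j ^ 2 * x ^ j /
      (qPoch q q j * qPoch x q j * qPoch c q j) := by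
  set F : ℕ × ℕ → ℂ := fun p => qPP a c q p.1 * qTau q p.1 ^ 2 * x ^ p.1 /
    (qPoch q q p.1 * qPoch c q p.1) * (qTau q p.2 * (x * q ^ p.1) ^ p.2 / qPoch q q p.2) with hF
  have sF : Summable F := by
    refine Summable.of_norm_bounded
      (g := fun p : ℕ × ℕ => ‖qPP a c q p.1 * qTau q p.1 ^ 2 * x ^ p.1 /
    (qPoch q q p.1 * qPoch c q p.1)‖ * ‖qTau q p.2 * x ^ p.2 / qPoch q q p.2‖) ?_ ?_
    · exact (sumT q hq1 a c x).mul_of_nonneg (sumE q hq1 x) (fun _ => norm_nonneg _)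
        (fun _ => norm_nonneg _)
    · intro p
      simp only [hF]
      rw [norm_mul]
      gcongr
      rw [norm_div, norm_div, norm_mul, norm_mul]
      gcongr
      rw [norm_pow, norm_pow, norm_mul]
      gcongr
      apply mul_le_of_le_one_right (norm_nonneg _)
      rw [norm_pow]
      exact pow_le_one₀ (norm_nonneg _) hq1.le
  have e1 : ∑' p, F p = qPochInf x q * ∑' j : ℕ, qPP a c q j * qTau q j ^ 2 * x ^ j /
      (qPoch q q j * qPoch x q j * qPoch c q j) := by
    rw [sF.tsum_prod, ← tsum_mul_left]
    apply tsum_congr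
    intro j
    simp only [hF]
    rw [tsum_mul_left]
    change _ * qE q (x * q ^ j) = _
    rw [← qE_eq q hq1, qE_iter q hq1 x j]
    have := qPoch_ne x q hx j
    field_simp
  rw [← e1, tsum_anti F sF]
  apply tsum_congr
  intro N
  have h := chu q hq1 a N c hc
  have : qPoch a q N * qTau q N * x ^ N / (qPoch c q N * qPoch q q N) =
    qTau q N * x ^ N * (qPoch a q N / (qPoch q q N * qPoch c q N)) := by ring
  rw [this, ← h, Finset.mul_sum]
  apply Finset.sum_congr rfl
  intro p hp
  rw [← Finset.HasAntidiagonal.mem_antidiagonal.mp hp, qTau_add', pow_add]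
  simp only [hF]
  rw [mul_pow, ← pow_mul]
  simp only [div_eq_mul_inv, mul_inv]
  ring

theorem reflect (q : ℂ) (hq : q ≠ 0) (b : ℂ) (u v k : ℕ) :
    qPoch (q ^ ((1 : ℤ) - ((v + k : ℕ) : ℤ)) / b) q k * qTau q k * q ^ ((1 + u + v) * k) =
    qPP (q ^ (1 + u) / b) (q ^ (1 + u + v)) q k := by
  induction k with
  | zero => simp [qPoch, qTau, qPP]
  | succ k ih =>
    have e : q ^ ((1 : ℤ) - ((v + (k+1) : ℕ) : ℤ)) * q = q ^ ((1 : ℤ) - ((v + k : ℕ) : ℤ)) := by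
      rw [← zpow_add_one₀ hq]; congr 1; push_cast; ring
    have e2 : q ^ ((1 : ℤ) - ((v + (k+1) : ℕ) : ℤ)) * q ^ (v + k) = 1 := by
      rw [← zpow_natCast, ← zpow_add₀ hq]
      have : (1 : ℤ) - ((v + (k+1) : ℕ) : ℤ) + ((v + k : ℕ) : ℤ) = 0 := by push_cast; ring
      rw [this, zpow_zero]
    rw [qPoch_succ_left, div_mul_eq_mul_div, e, qPP_succ', ← ih, qTau_succ']
    generalize q ^ ((1 : ℤ) - ((v + (k+1) : ℕ) : ℤ)) = w at *
    generalize qPoch (q ^ ((1 : ℤ) - ((v + k : ℕ) : ℤ)) / b) q k = W at *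
    rw [pow_add] at e2
    simp only [mul_add, mul_one, pow_add, pow_one, div_eq_mul_inv]
    linear_combination (W * qTau q k * q ^ ((1+u+v)*k) * q * q^u * b⁻¹) * e2

theorem fiber (q : ℂ) (hq0 : q ≠ 0) (hq1 : ‖q‖ < 1) (b x y : ℂ) (hy : y ≠ 0)
    (hx : ∀ k : ℕ, 1 - x * q ^ k ≠ 0) (u v : ℕ) (huv : u = 0 ∨ v = 0) :
    ∑' k : ℕ, qPoch (q / b) q (u+k) * y ^ (u+k) * qTau q (v+k) * (x / y) ^ (v+k) /
      (qPoch q q (u+k) * qPoch q q (v+k)) =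
    qPochInf x q * ∑' k : ℕ, qTau q (v+k) * (x / y) ^ (v+k) *
      qPoch (q ^ ((1 : ℤ) - ((v+k : ℕ) : ℤ)) / b) q (u+k) * (q ^ (v+k) * y) ^ (u+k) /
      (qPoch q q (v+k) * qPoch x q (v+k) * qPoch q q (u+k)) := by
  have hc : ∀ k : ℕ, 1 - q ^ (1+u+v) * q ^ k ≠ 0 := fun k => by
    have := one_sub_pow_ne q hq1 (u+v+k)
    rw [← pow_add]; convert this using 3; ring
  have hx' : ∀ k : ℕ, 1 - x * q ^ v * q ^ k ≠ 0 := fun k => by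
    have := hx (v+k)
    rwa [pow_add, ← mul_assoc] at this
  have hxv := qPoch_ne x q hx v
  have hcore := core q hq1 (q ^ (1+u) / b) (q ^ (1+u+v)) (x * q ^ v) hc hx'
  have hinf : qPochInf x q = qPoch x q v * qPochInf (x * q ^ v) q := by
    rw [← qE_eq q hq1, ← qE_eq q hq1, qE_iter q hq1 x v]
  have hyx : ∀ k, y ^ (u+k) * (x/y)^(v+k) = y ^ u * (x/y)^v * x ^ k := fun k => by
    rw [pow_add, pow_add, div_pow, div_pow]; field_simp
  have hqq : ∀ k, qPoch q q (u+k) * qPoch q q (v+k) =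
      qPoch q q k * (qPoch q q (u+v) * qPoch (q ^ (1+u+v)) q k) := fun k => by
    have : q ^ (1+u+v) = q * q ^ (u+v) := by ring
    rw [this, ← qPoch_add']
    rcases huv with rfl | rfl <;> simp [mul_comm]
  set K := qPoch (q/b) q u * y ^ u * (x/y)^v * qTau q v / qPoch q q (u+v) with hK
  have eL : ∑' k : ℕ, qPoch (q / b) q (u+k) * y ^ (u+k) * qTau q (v+k) * (x / y) ^ (v+k) /
      (qPoch q q (u+k) * qPoch q q (v+k)) = K * ∑' j : ℕ, qPoch (q ^ (1+u) / b) q j * qTau q j *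
      (x * q ^ v) ^ j / (qPoch (q ^ (1+u+v)) q j * qPoch q q j) := by
    rw [← tsum_mul_left]
    apply tsum_congr
    intro k
    have : qPoch (q / b) q (u+k) * y ^ (u+k) * qTau q (v+k) * (x / y) ^ (v+k) =
      qPoch (q / b) q (u+k) * qTau q (v+k) * (y ^ (u+k) * (x / y) ^ (v+k)) := by ring
    have h2 : q ^ (1+u) / b = q / b * q ^ u := by ring
    rw [this, hyx, hqq, qPoch_add', qTau_add', hK, h2, mul_pow, ← pow_mul]
    simp only [div_eq_mul_inv, mul_inv]
    ring
  rw [eL, hcore, hinf, ← tsum_mul_left, ← tsum_mul_left, ← tsum_mul_left]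
  apply tsum_congr
  intro k
  have hP : qPoch (q ^ ((1 : ℤ) - ((v+k : ℕ) : ℤ)) / b) q (u+k) =
      qPoch (q ^ ((1 : ℤ) - ((v+k : ℕ) : ℤ)) / b) q k * qPoch (q/b) q u := by
    rcases huv with rfl | rfl
    · simp [qPoch]
    · rw [add_comm u k, qPoch_add', div_mul_eq_mul_div, ← zpow_natCast, ← zpow_add₀ hq0]
      simp
  have hpow : (q ^ (v+k)) ^ (u+k) = q ^ ((1+u+v)*k) * (qTau q k)^2 := by
    have ht : ∀ k, qTau q k ^ 2 * q ^ k = q ^ (k * k) := by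
      intro k
      induction k with
      | zero => simp [qTau]
      | succ k ih => 
        have : q ^ ((k+1)*(k+1)) = q ^ (k*k) * q ^ k * q ^ k * q := by ring
        rw [qTau_succ', this, ← ih]; ring
    have : q ^ ((1+u+v)*k) = q ^ k * q ^ ((u+v)*k) := by ring
    have h3 : q ^ ((v+k)*(u+k)) = q ^ (k*k) * q ^ ((u+v)*k) := by
      rw [← pow_add]
      congr 1
      rcases huv with rfl | rfl <;> ring
    rw [this, ← pow_mul, h3, ← ht]
    ring
  have hden : qPoch q q (v+k) * qPoch x q (v+k) * qPoch q q (u+k) =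
    (qPoch q q (u+k) * qPoch q q (v+k)) * qPoch x q (v+k) := by ring
  have : ∀ W : ℂ, qTau q (v+k) * (x / y) ^ (v+k) * W * (q ^ (v+k) * y) ^ (u+k) =
      (qTau q (v+k)) * W * (q ^ (v+k)) ^ (u+k) * (y ^ (u+k) * (x / y) ^ (v+k)) := by
    intro W; rw [mul_pow]; ring
  rw [hden, this, hP, hqq, hpow, hyx, qPoch_add' x, qTau_add', ← reflect q hq0, hK]
  rw [mul_pow x, ← pow_mul]
  simp only [div_eq_mul_inv, mul_inv]
  have hz : qPoch x q v * (qPoch x q v)⁻¹ = 1 := mul_inv_cancel₀ hxv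
  generalize (qPoch x q v)⁻¹ = z at *
  generalize qPoch x q v = z' at *
  generalize hw : qPoch (q ^ ((1 : ℤ) - ((v+k : ℕ) : ℤ)) * b⁻¹) q k = W
  generalize qPoch (q * b⁻¹) q u = W2
  generalize (qPoch (x * q ^ v) q k)⁻¹ = W3
  generalize (qPoch q q (u+v))⁻¹ = W4
  generalize (qPoch q q k)⁻¹ = W5
  generalize (qPoch (q^(1+u+v)) q k)⁻¹ = W6
  generalize qPochInf (x * q ^ v) q = W7
  generalize q ^ ((1+u+v)*k) = W8
  generalize (x * y⁻¹)^v = W9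
  generalize y^u = W10
  generalize x^k = W11
  generalize q^(v*k) = W12
  generalize qTau q v = T1
  generalize qTau q k = T2
  linear_combination (-(W7 * T1 * T2 * W12 * W * W2 * W8 * T2^2 * W10 * W9 * W11 * W5 * W4 * W6 * W3)) * hz

theorem tsum_fibers (f : ℕ × ℕ → ℂ) (hf : Summable f) :
    ∑' p, f p = ∑' n : ℤ, ∑' k : ℕ, f (n.toNat + k, (-n).toNat + k) := by
  let e : ℤ × ℕ ≃ ℕ × ℕ :=
    { toFun := fun t => (t.1.toNat + t.2, (-t.1).toNat + t.2)
      invFun := fun p => ((p.1 : ℤ) - p.2, min p.1 p.2)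
      left_inv := by
        rintro ⟨n, k⟩
        ext
        · simp only; omega
        · simp only; omega
      right_inv := by
        rintro ⟨i, j⟩
        ext
        · simp only; omega
        · simp only; omega }
  rw [← e.tsum_eq f, (show Summable (fun t => f (e t)) from e.summable_iff.mpr hf).tsum_prod]
  rfl

theorem stmt5 (q : ℂ) (hq0 : 0 < ‖q‖) (hq1 : ‖q‖ < 1)
    (A : ℤ → ℂ) (b x y : ℂ) (hb : b ≠ 0) (hy : y ≠ 0)
    (hx : ∀ m : ℕ, x ≠ q ^ (-(m : ℤ)))
    (h1 : Summable (fun p : ℕ × ℕ => ‖qPoch (q / b) q p.1 * y ^ p.1 *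
      A ((p.1 : ℤ) - (p.2 : ℤ)) * (-1 : ℂ) ^ p.2 * q ^ (p.2 * (p.2 - 1) / 2) *
      (x / y) ^ p.2 / (qPoch q q p.1 * qPoch q q p.2)‖))
    (h2 : Summable (fun p : ℕ × ℕ => ‖(-1 : ℂ) ^ p.2 * q ^ (p.2 * (p.2 - 1) / 2) *
      (x / y) ^ p.2 * A ((p.1 : ℤ) - (p.2 : ℤ)) *
      qPoch (q ^ ((1 : ℤ) - (p.2 : ℤ)) / b) q p.1 * (q ^ p.2 * y) ^ p.1 /
      (qPoch q q p.2 * qPoch x q p.2 * qPoch q q p.1)‖)) :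
    ∑' i : ℕ, (qPoch (q / b) q i * y ^ i / qPoch q q i) *
      ∑' j : ℕ, A ((i : ℤ) - (j : ℤ)) * qTau q j * (x / y) ^ j / qPoch q q j
    = qPochInf x q * ∑' j : ℕ, (qTau q j * (x / y) ^ j / (qPoch q q j * qPoch x q j)) *
      ∑' i : ℕ, A ((i : ℤ) - (j : ℤ)) * qPoch (q ^ ((1 : ℤ) - (j : ℤ)) / b) q i *
        (q ^ j * y) ^ i / qPoch q q i := by
  have hq0' : q ≠ 0 := norm_pos_iff.mp hq0
  have hx' : ∀ k : ℕ, 1 - x * q ^ k ≠ 0 := by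
    intro k h
    apply hx k
    rw [zpow_neg, zpow_natCast]
    exact eq_inv_of_mul_eq_one_left (sub_eq_zero.mp h).symm
  have s1 := h1.of_norm
  have s2 := h2.of_norm
  have L : ∑' i : ℕ, (qPoch (q / b) q i * y ^ i / qPoch q q i) *
      ∑' j : ℕ, A ((i : ℤ) - (j : ℤ)) * qTau q j * (x / y) ^ j / qPoch q q j =
      ∑' p : ℕ × ℕ, qPoch (q / b) q p.1 * y ^ p.1 *
      A ((p.1 : ℤ) - (p.2 : ℤ)) * (-1 : ℂ) ^ p.2 * q ^ (p.2 * (p.2 - 1) / 2) *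
      (x / y) ^ p.2 / (qPoch q q p.1 * qPoch q q p.2) := by
    rw [s1.tsum_prod]
    apply tsum_congr
    intro i
    rw [← tsum_mul_left]
    apply tsum_congr
    intro j
    simp only [qTau, div_eq_mul_inv, mul_inv]
    ring
  have R : ∑' j : ℕ, (qTau q j * (x / y) ^ j / (qPoch q q j * qPoch x q j)) *
      ∑' i : ℕ, A ((i : ℤ) - (j : ℤ)) * qPoch (q ^ ((1 : ℤ) - (j : ℤ)) / b) q i *
        (q ^ j * y) ^ i / qPoch q q i =
      ∑' p : ℕ × ℕ, (-1 : ℂ) ^ p.2 * q ^ (p.2 * (p.2 - 1) / 2) *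
      (x / y) ^ p.2 * A ((p.1 : ℤ) - (p.2 : ℤ)) *
      qPoch (q ^ ((1 : ℤ) - (p.2 : ℤ)) / b) q p.1 * (q ^ p.2 * y) ^ p.1 /
      (qPoch q q p.2 * qPoch x q p.2 * qPoch q q p.1) := by
    have s3 := (Equiv.prodComm ℕ ℕ).summable_iff.mpr s2
    simp only [Function.comp_def] at s3
    rw [← (Equiv.prodComm ℕ ℕ).tsum_eq, s3.tsum_prod]
    apply tsum_congr
    intro j
    rw [← tsum_mul_left]
    apply tsum_congr
    intro i
    simp only [Equiv.prodComm_apply, Prod.swap, qTau, div_eq_mul_inv, mul_inv]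
    ring
  rw [L, R, tsum_fibers _ s1, tsum_fibers _ s2, ← tsum_mul_left]
  apply tsum_congr
  intro n
  have hf := fiber q hq0' hq1 b x y hy hx' n.toNat (-n).toNat (by omega)
  have hA : ∀ k : ℕ, ((n.toNat + k : ℕ) : ℤ) - (((-n).toNat + k : ℕ) : ℤ) = n := by
    intro k; omega
  simp only [hA]
  have := congrArg (fun t => A n * t) hf
  rw [mul_left_comm, ← tsum_mul_left, ← tsum_mul_left] at this
  convert this using 1
  · apply tsum_congr
    intro k
    simp only [qTau, div_eq_mul_inv]
    ring
  · congr 1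
    apply tsum_congr
    intro k
    simp only [qTau, div_eq_mul_inv]
    ring
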